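/- arXiv:1603.02235 — 2 statements merged into one kernel-verified Lean document; each statement's English description precedes it below -/
import Mathlib

section
/- For every y > 0, limsup_{n→∞} sup_{u ≥ √(N_n y)} (1/√u) log P(Y^{(n)} ≥ u) ≤ −√2·κ, where κ = μ − log μ − 1 > 0. -/
open scoped Classical
open Filter

/-- Displacement of a ball with hash address `a` when the set `occ` of urns is occupied:
the least `k` such that urn `a + k` (cyclically) is free. -/
noncomputable def hashStep (m : ℕ) (occ : Finset (ZMod m)) (a : ZMod m) : ℕ :=
  if hex : ∃ k : ℕ, a + (k : ZMod m) ∉ occ then Nat.find hex else 0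

/-- One insertion step: updates the occupied set and the accumulated total displacement. -/
noncomputable def hashFoldStep (m : ℕ) (p : Finset (ZMod m) × ℕ) (a : ZMod m) :
    Finset (ZMod m) × ℕ :=
  (insert (a + (hashStep m p.1 a : ZMod m)) p.1, p.2 + hashStep m p.1 a)

/-- Total displacement of a list of hash addresses (processed sequentially). -/
noncomputable def totalDispList (m : ℕ) (l : List (ZMod m)) : ℕ :=
  (l.foldl (hashFoldStep m) (∅, 0)).2

/-- Total displacement `d(h)` of a hash sequence `h` of length `m` and size `n`. -/
noncomputable def totalDisp (m n : ℕ) (h : Fin n → Fin m) : ℕ :=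
  totalDispList m ((List.ofFn h).map (fun x => ((x : ℕ) : ZMod m)))

/-- `P(d_{m,n} ≥ a)` where the hash sequence is uniform on `{1,…,m}^n`. -/
noncomputable def dProbGe (m n : ℕ) (a : ℝ) : ℝ :=
  ((Finset.univ.filter (fun h : Fin n → Fin m => a ≤ (totalDisp m n h : ℝ))).card : ℝ)
    / (m : ℝ) ^ n

/-- The Borel distribution with parameter `μ`: `P(X = l) = e^{-μl} (μl)^{l-1} / l!` for `l ≥ 1`. -/
noncomputable def borelPMF (μ : ℝ) (l : ℕ) : ℝ :=
  Real.exp (-(μ * l)) * (μ * l) ^ (l - 1) / (Nat.factorial l)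

/-- `P(Y ≥ u)` where `X` has the Borel distribution with parameter `μ` and, conditionally on
`X = l`, `Y` is distributed as `d_{l,l-1}`. -/
noncomputable def hashYTail (μ : ℝ) (u : ℝ) : ℝ :=
  ∑' l : ℕ, borelPMF μ (l + 1) * dProbGe (l + 1) l u

theorem hashStep_le_card (m : ℕ) [NeZero m] (occ : Finset (ZMod m)) (a : ZMod m) :
    hashStep m occ a ≤ occ.card := by
  unfold hashStep
  split_ifs with hex
  · by_contra! hlt
    have hmem : ∀ j ≤ occ.card, a + (j : ZMod m) ∈ occ := fun j hj => by
      by_contra hj'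
      exact Nat.find_min hex (lt_of_le_of_lt hj hlt) hj'
    have hcard : occ.card < m := by
      obtain ⟨k, hk⟩ := hex
      have := Finset.card_lt_univ_of_notMem hk
      rwa [ZMod.card] at this
    have hle : (Finset.range (occ.card + 1)).card ≤ occ.card := by
      refine Finset.card_le_card_of_injOn (fun j : ℕ => a + (j : ZMod m))
        (fun j hj => hmem j (by simpa [Nat.lt_succ_iff] using hj)) ?_
      intro i hi j hj hij
      have hi' : i < m := by simp at hi; omega
      have hj' : j < m := by simp at hj; omega
      have := congrArg ZMod.val (add_left_cancel hij)
      rwa [ZMod.val_natCast_of_lt hi', ZMod.val_natCast_of_lt hj'] at this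
    simp at hle
  · exact Nat.zero_le _

theorem add_hashStep_notMem (m : ℕ) [NeZero m] (occ : Finset (ZMod m)) (a : ZMod m)
    (hcard : occ.card < m) : a + (hashStep m occ a : ZMod m) ∉ occ := by
  have hex : ∃ k : ℕ, a + (k : ZMod m) ∉ occ := by
    by_contra! hall
    have huniv : occ = Finset.univ := Finset.eq_univ_iff_forall.2 fun x => by
      simpa using hall (x - a).val
    rw [huniv, Finset.card_univ, ZMod.card] at hcard
    exact lt_irrefl _ hcard
  unfold hashStep
  rw [dif_pos hex]
  exact Nat.find_spec hex

theorem two_mul_foldl_hashFoldStep_le (m : ℕ) [NeZero m] (l : List (ZMod m)) :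
    ∀ (p : Finset (ZMod m) × ℕ) (c : ℕ), p.1.card ≤ c → 2 * p.2 ≤ c ^ 2 →
      2 * (l.foldl (hashFoldStep m) p).2 ≤ (c + l.length) ^ 2 := by
  induction l with
  | nil => intro p c _ hp; simpa using hp
  | cons a l ih =>
    intro p c hc hp
    have h := ih (hashFoldStep m p a) (c + 1)
      ((Finset.card_insert_le _ _).trans (Nat.succ_le_succ hc)) (by
        have := hashStep_le_card m p.1 a
        simp only [hashFoldStep]
        nlinarith)
    simpa [add_assoc, add_comm 1] using h

theorem totalDisp_eq_totalDispList_ofFn (m n : ℕ) (h : Fin n → Fin m) :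
    totalDisp m n h = totalDispList m (List.ofFn fun i => ((h i : ℕ) : ZMod m)) := by
  have hbind : (do let a ← List.ofFn h; pure (a : ℕ) : List ℕ) =
      (List.ofFn h).map (fun a : Fin m => (a : ℕ)) := List.flatMap_pure_eq_map _ _
  unfold totalDisp
  rw [hbind, List.map_map, List.map_ofFn]
  rfl

theorem two_mul_totalDisp_le (m n : ℕ) [NeZero m] (h : Fin n → Fin m) :
    2 * totalDisp m n h ≤ n ^ 2 := by
  simpa [totalDisp_eq_totalDispList_ofFn, totalDispList] using two_mul_foldl_hashFoldStep_le m
    (List.ofFn fun i => ((h i : ℕ) : ZMod m)) (∅, 0) 0 (by simp) (by simp)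

theorem foldl_hashFoldStep_card_and_sum_val (m : ℕ) [NeZero m] (l : List (ZMod m)) :
    ∀ (p : Finset (ZMod m) × ℕ) (s : ℕ), p.1.card + l.length ≤ m →
      ∑ x ∈ p.1, x.val ≤ p.2 + s →
      (l.foldl (hashFoldStep m) p).1.card = p.1.card + l.length ∧
      ∑ x ∈ (l.foldl (hashFoldStep m) p).1, x.val ≤
        (l.foldl (hashFoldStep m) p).2 + (s + (l.map ZMod.val).sum) := by
  induction l with
  | nil => intro p s _ hp; simpa using hp
  | cons a l ih =>
    intro p s hc hp
    simp only [List.length_cons] at hc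
    have hnot := add_hashStep_notMem m p.1 a (by omega)
    have hcard : (hashFoldStep m p a).1.card = p.1.card + 1 := Finset.card_insert_of_notMem hnot
    have hval : (a + (hashStep m p.1 a : ZMod m)).val ≤ a.val + hashStep m p.1 a :=
      (ZMod.val_add_le _ _).trans (Nat.add_le_add_left ((ZMod.val_natCast m _).trans_le (Nat.mod_le _ _)) _)
    have h := ih (hashFoldStep m p a) (s + a.val) (by omega) (by
      simp only [hashFoldStep]
      rw [Finset.sum_insert hnot]
      omega)
    rw [hcard] at h
    simp only [List.foldl_cons, List.length_cons, List.map_cons, List.sum_cons]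
    exact ⟨by omega, by omega⟩

theorem sum_range_card_le_sum_val {m : ℕ} [NeZero m] (s : Finset (ZMod m)) :
    ∑ i ∈ Finset.range s.card, i ≤ ∑ x ∈ s, x.val := by
  have hinj : Function.Injective fun x : ZMod m => (x.val : ℤ) :=
    Nat.cast_injective.comp (ZMod.val_injective m)
  have h := Finset.sum_range_le_sum (s := s.image fun x => (x.val : ℤ)) (c := 0) (by
    intro x hx
    obtain ⟨y, -, rfl⟩ := Finset.mem_image.1 hx
    exact Int.natCast_nonneg _)
  rw [Finset.card_image_of_injective _ hinj, Finset.sum_image hinj.injOn] at h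
  zify
  simpa only [zero_add] using h

theorem le_totalDisp_of_forall_le (m n k : ℕ) [NeZero m] (hn : n ≤ m) (h : Fin n → Fin m)
    (hk : ∀ i, (h i : ℕ) ≤ k) : n * (n - 1) / 2 ≤ totalDisp m n h + n * k := by
  obtain ⟨hcard, hsum⟩ := foldl_hashFoldStep_card_and_sum_val m
    (List.ofFn fun i => ((h i : ℕ) : ZMod m)) (∅, 0) 0 (by simpa using hn) (by simp)
  have hlist : ((List.ofFn fun i => ((h i : ℕ) : ZMod m)).map ZMod.val).sum ≤ n * k := by
    have := List.sum_le_card_nsmul ((List.ofFn fun i => ((h i : ℕ) : ZMod m)).map ZMod.val) k (by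
      intro x hx
      simp only [List.mem_map, List.mem_ofFn] at hx
      obtain ⟨_, ⟨i, rfl⟩, rfl⟩ := hx
      rw [ZMod.val_natCast_of_lt (h i).2]
      exact hk i)
    simpa using this
  rw [totalDisp_eq_totalDispList_ofFn, totalDispList]
  set s := (List.ofFn fun i => ((h i : ℕ) : ZMod m)).foldl (hashFoldStep m) (∅, 0)
  have hs : s.1.card = n := by simpa using hcard
  have hrange := sum_range_card_le_sum_val s.1
  rw [hs, Finset.sum_range_id] at hrange
  omega

theorem dProbGe_nonneg (m n : ℕ) (a : ℝ) : 0 ≤ dProbGe m n a := by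
  unfold dProbGe; positivity

theorem dProbGe_le_one (m n : ℕ) [NeZero m] (a : ℝ) : dProbGe m n a ≤ 1 := by
  have hm : (0 : ℝ) < (m : ℝ) ^ n := pow_pos (Nat.cast_pos.2 (NeZero.pos m)) n
  unfold dProbGe
  rw [div_le_one hm]
  have h := Finset.card_le_univ
    (Finset.univ.filter (fun h : Fin n → Fin m => a ≤ (totalDisp m n h : ℝ)))
  simp only [Fintype.card_fun, Fintype.card_fin] at h
  exact_mod_cast h

theorem dProbGe_eq_zero {m n : ℕ} [NeZero m] {a : ℝ} (h : (n : ℝ) < √(2 * a)) :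
    dProbGe m n a = 0 := by
  unfold dProbGe
  rw [Finset.filter_false_of_mem, Finset.card_empty, Nat.cast_zero, zero_div]
  intro g _ hg
  have hd : (2 * totalDisp m n g : ℝ) ≤ (n : ℝ) ^ 2 := by
    exact_mod_cast two_mul_totalDisp_le m n g
  have := (Real.lt_sqrt (Nat.cast_nonneg n)).1 h
  linarith

/-- Hash sequences with all addresses in the first quarter of the urns have large displacement. -/
theorem inv_four_pow_le_dProbGe {k : ℕ} (hk : 2 ≤ k) {u : ℝ} (hu : u ≤ (k : ℝ) ^ 2) :
    ((4 : ℝ) ^ (4 * k))⁻¹ ≤ dProbGe (4 * k) (4 * k - 1) u := by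
  have : NeZero (4 * k) := ⟨by omega⟩
  have hk0 : (0 : ℝ) < k := by exact_mod_cast (by omega : 0 < k)
  have hcount : k ^ (4 * k - 1) ≤ (Finset.univ.filter
      (fun h : Fin (4 * k - 1) → Fin (4 * k) =>
        u ≤ (totalDisp (4 * k) (4 * k - 1) h : ℝ))).card := by
    have hle : k ≤ 4 * k := by omega
    have hcard := Finset.card_le_card_of_injOn (s := Finset.univ)
      (t := Finset.univ.filter (fun h : Fin (4 * k - 1) → Fin (4 * k) =>
        u ≤ (totalDisp (4 * k) (4 * k - 1) h : ℝ)))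
      (fun (g : Fin (4 * k - 1) → Fin k) i => Fin.castLE hle (g i)) ?_ ?_
    · simpa using hcard
    · intro g _
      simp only [Finset.coe_filter, Finset.mem_univ, true_and, Set.mem_ofPred_eq]
      have h := le_totalDisp_of_forall_le (4 * k) (4 * k - 1) (k - 1) (by omega)
        (fun i => Fin.castLE hle (g i)) (fun i => by
          have := (g i).2
          simp only [Fin.val_castLE]
          omega)
      refine hu.trans ?_
      obtain ⟨j, rfl⟩ : ∃ j, k = j + 2 := ⟨k - 2, by omega⟩
      have e₁ : 4 * (j + 2) - 1 = 4 * j + 7 := by omega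
      have e₂ : (4 * (j + 2) - 1) * (4 * (j + 2) - 1 - 1) / 2 = (4 * j + 7) * (2 * j + 3) := by
        rw [e₁, show 4 * j + 7 - 1 = (2 * j + 3) * 2 by omega, ← mul_assoc,
          Nat.mul_div_cancel _ two_pos]
      have e₃ : j + 2 - 1 = j + 1 := by omega
      rw [e₂, e₃] at h
      have h' : (j + 2) ^ 2 + (4 * (j + 2) - 1) * (j + 1) ≤ (4 * j + 7) * (2 * j + 3) := by
        rw [e₁]; nlinarith
      exact_mod_cast (by omega : (j + 2) ^ 2 ≤ _)
    · intro g _ g' _ h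
      funext i
      exact Fin.castLE_injective hle (congrFun h i)
  unfold dProbGe
  calc ((4 : ℝ) ^ (4 * k))⁻¹ ≤ ((4 : ℝ) ^ (4 * k - 1))⁻¹ := by
        gcongr
        · norm_num
        · omega
    _ = (k : ℝ) ^ (4 * k - 1) / ((4 * k : ℕ) : ℝ) ^ (4 * k - 1) := by
        push_cast
        rw [mul_pow]
        field_simp
    _ ≤ _ := by
        gcongr
        exact_mod_cast hcount

theorem borelPMF_nonneg {μ : ℝ} (hμ : 0 ≤ μ) (l : ℕ) : 0 ≤ borelPMF μ l := by
  unfold borelPMF; positivity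

theorem borelPMF_succ_le {μ : ℝ} (hμ : 0 < μ) (l : ℕ) :
    borelPMF μ (l + 1) ≤ μ⁻¹ * Real.exp (-((μ - Real.log μ - 1) * (l + 1 : ℕ))) := by
  have hl : (1 : ℝ) ≤ (l + 1 : ℕ) := by exact_mod_cast Nat.succ_pos l
  set L : ℝ := ((l + 1 : ℕ) : ℝ)
  have hst : L ^ (l + 1) / (l + 1).factorial ≤ Real.exp L :=
    Real.pow_div_factorial_le_exp L (by linarith) _
  have hpow : Real.exp (Real.log μ * L) = μ ^ (l + 1) := by
    rw [mul_comm, Real.exp_nat_mul, Real.exp_log hμ]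
  have hexp : Real.exp (-((μ - Real.log μ - 1) * L)) =
      Real.exp (-(μ * L)) * μ ^ (l + 1) * Real.exp L := by
    rw [← hpow, ← Real.exp_add, ← Real.exp_add]; ring_nf
  unfold borelPMF
  rw [hexp, Nat.add_sub_cancel]
  change Real.exp (-(μ * L)) * (μ * L) ^ l / _ ≤ _
  calc Real.exp (-(μ * L)) * (μ * L) ^ l / (l + 1).factorial
      = Real.exp (-(μ * L)) * μ ^ l * (L ^ l / (l + 1).factorial) := by rw [mul_pow]; ring
    _ ≤ Real.exp (-(μ * L)) * μ ^ l * (L ^ (l + 1) / (l + 1).factorial) := by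
        gcongr
        exact Nat.le_succ l
    _ ≤ Real.exp (-(μ * L)) * μ ^ l * Real.exp L := by gcongr
    _ = _ := by rw [pow_succ]; field_simp

theorem exp_le_borelPMF {μ : ℝ} (hμ : 0 < μ) (hμ1 : μ ≤ 1) {l : ℕ} (hl : l ≠ 0) :
    Real.exp (-((2 - Real.log μ) * l)) ≤ borelPMF μ l := by
  have hl1 : (1 : ℝ) ≤ l := by exact_mod_cast Nat.pos_of_ne_zero hl
  have hpow : Real.exp (Real.log μ * l) = μ ^ l := by
    rw [mul_comm, Real.exp_nat_mul, Real.exp_log hμ]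
  have hexp : Real.exp (-((2 - Real.log μ) * l)) =
      Real.exp (-l) * μ ^ l * (Real.exp l)⁻¹ := by
    rw [← hpow, ← Real.exp_neg, ← Real.exp_add, ← Real.exp_add]; ring_nf
  have hfac : ((l.factorial : ℕ) : ℝ) ≤ (l : ℝ) ^ l := by exact_mod_cast Nat.factorial_le_pow l
  have hlexp : (l : ℝ) ≤ Real.exp l := by linarith [Real.add_one_le_exp (l : ℝ)]
  unfold borelPMF
  rw [hexp]
  calc Real.exp (-l) * μ ^ l * (Real.exp l)⁻¹
      ≤ Real.exp (-(μ * l)) * μ ^ (l - 1) * (l : ℝ)⁻¹ := by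
        gcongr ?_ * ?_ * ?_
        · exact Real.exp_le_exp.2 (by nlinarith)
        · exact pow_le_pow_of_le_one hμ.le hμ1 (Nat.sub_le _ _)
        · gcongr
    _ = Real.exp (-(μ * l)) * (μ * l) ^ (l - 1) / (l : ℝ) ^ l := by
        obtain ⟨j, rfl⟩ := Nat.exists_eq_succ_of_ne_zero hl
        rw [mul_pow, Nat.succ_sub_one, pow_succ]
        field_simp
    _ ≤ _ := by gcongr

theorem summand_hashYTail_nonneg {μ : ℝ} (hμ : 0 ≤ μ) (u : ℝ) (l : ℕ) :
    0 ≤ borelPMF μ (l + 1) * dProbGe (l + 1) l u :=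
  mul_nonneg (borelPMF_nonneg hμ _) (dProbGe_nonneg _ _ _)

/-- Exponential tilting bound for one summand of the tail probability. -/
theorem summand_hashYTail_le {μ a b : ℝ} (hμ : 0 < μ) (ha : 0 ≤ a)
    (hb : a + b ≤ μ - Real.log μ - 1) (u : ℝ) (l : ℕ) :
    borelPMF μ (l + 1) * dProbGe (l + 1) l u ≤
      μ⁻¹ * Real.exp (-(a * √(2 * u))) * Real.exp (-b) ^ l * Real.exp (-b) := by
  by_cases h : (l : ℝ) < √(2 * u)
  · rw [dProbGe_eq_zero h, mul_zero]
    positivity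
  · push Not at h
    refine (mul_le_of_le_one_right (borelPMF_nonneg hμ.le _) (dProbGe_le_one _ _ _)).trans
      ((borelPMF_succ_le hμ l).trans ?_)
    rw [mul_assoc, mul_assoc, ← Real.exp_nat_mul, ← Real.exp_add, ← Real.exp_add]
    refine mul_le_mul_of_nonneg_left (Real.exp_le_exp.2 ?_) (inv_nonneg.2 hμ.le)
    push_cast
    have hl : (0 : ℝ) ≤ l := Nat.cast_nonneg l
    have h₁ := mul_le_mul_of_nonneg_left h ha
    have h₂ := mul_le_mul_of_nonneg_right hb (by linarith : (0 : ℝ) ≤ l + 1)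
    nlinarith

theorem summable_tilted_bound {b : ℝ} (hb : 0 < b) (C : ℝ) :
    Summable fun l : ℕ => C * Real.exp (-b) ^ l * Real.exp (-b) :=
  ((summable_geometric_of_lt_one (Real.exp_pos _).le
    (Real.exp_lt_one_iff.2 (by linarith))).mul_left C).mul_right _

theorem summable_hashYTail {μ : ℝ} (hμ : 0 < μ) (hκ : 0 < μ - Real.log μ - 1) (u : ℝ) :
    Summable fun l : ℕ => borelPMF μ (l + 1) * dProbGe (l + 1) l u :=
  Summable.of_nonneg_of_le (summand_hashYTail_nonneg hμ.le u)
    (summand_hashYTail_le hμ le_rfl (zero_add _).le u) (summable_tilted_bound hκ _)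

theorem hashYTail_le {μ a b : ℝ} (hμ : 0 < μ) (ha : 0 ≤ a) (hb0 : 0 < b)
    (hb : a + b ≤ μ - Real.log μ - 1) (u : ℝ) :
    hashYTail μ u ≤ μ⁻¹ * (1 - Real.exp (-b))⁻¹ * Real.exp (-(a * √(2 * u))) := by
  have hlt : Real.exp (-b) < 1 := Real.exp_lt_one_iff.2 (by linarith)
  calc hashYTail μ u
      ≤ ∑' l : ℕ, μ⁻¹ * Real.exp (-(a * √(2 * u))) * Real.exp (-b) ^ l * Real.exp (-b) :=
        (summable_hashYTail hμ (by linarith) u).tsum_le_tsum (summand_hashYTail_le hμ ha hb u)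
          (summable_tilted_bound hb0 _)
    _ = μ⁻¹ * (1 - Real.exp (-b))⁻¹ * Real.exp (-(a * √(2 * u))) * Real.exp (-b) := by
        rw [tsum_mul_right, tsum_mul_left, tsum_geometric_of_lt_one (Real.exp_pos _).le hlt]
        ring
    _ ≤ _ := by
        refine mul_le_of_le_one_right ?_ hlt.le
        have : 0 < 1 - Real.exp (-b) := by linarith
        positivity

theorem exp_le_hashYTail {μ : ℝ} (hμ : 0 < μ) (hμ1 : μ ≤ 1) (hκ : 0 < μ - Real.log μ - 1)
    {k : ℕ} (hk : 2 ≤ k) {u : ℝ} (hu : u ≤ (k : ℝ) ^ 2) :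
    Real.exp (-(4 * (2 - Real.log μ + Real.log 4) * k)) ≤ hashYTail μ u := by
  have hs := (summable_hashYTail hμ hκ u).le_tsum (4 * k - 1)
    (fun l _ => summand_hashYTail_nonneg hμ.le u l)
  rw [Nat.sub_add_cancel (by omega)] at hs
  refine le_trans ?_ hs
  have h4 : ((4 : ℝ) ^ (4 * k))⁻¹ = Real.exp (-(Real.log 4 * (4 * k : ℕ))) := by
    rw [Real.exp_neg, mul_comm (Real.log 4), Real.exp_nat_mul, Real.exp_log (by norm_num)]
  have hsplit : Real.exp (-(4 * (2 - Real.log μ + Real.log 4) * k)) =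
      Real.exp (-((2 - Real.log μ) * (4 * k : ℕ))) * ((4 : ℝ) ^ (4 * k))⁻¹ := by
    rw [h4, ← Real.exp_add]; push_cast; ring_nf
  rw [hsplit]
  exact mul_le_mul (exp_le_borelPMF hμ hμ1 (by omega)) (inv_four_pow_le_dProbGe hk hu)
    (by positivity) (borelPMF_nonneg hμ.le _)

theorem hashYTail_pos {μ : ℝ} (hμ : 0 < μ) (hμ1 : μ ≤ 1) (hκ : 0 < μ - Real.log μ - 1)
    (u : ℝ) : 0 < hashYTail μ u := by
  obtain ⟨k, hk⟩ := exists_nat_ge (max 2 u)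
  have hk2 : (2 : ℝ) ≤ k := (le_max_left _ _).trans hk
  have hku : u ≤ k := (le_max_right _ _).trans hk
  exact (Real.exp_pos _).trans_le
    (exp_le_hashYTail hμ hμ1 hκ (by exact_mod_cast hk2) (by nlinarith))

theorem sub_log_sub_one_pos {μ : ℝ} (hμ : μ ∈ Set.Ioo (0 : ℝ) 1) : 0 < μ - Real.log μ - 1 := by
  linarith [Real.log_lt_sub_one_of_pos hμ.1 hμ.2.ne]

theorem log_hashYTail_div_sqrt_le {μ a b : ℝ} (hμ : μ ∈ Set.Ioo (0 : ℝ) 1) (ha : 0 ≤ a)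
    (hb0 : 0 < b) (hb : a + b ≤ μ - Real.log μ - 1) {u : ℝ} (hu : 0 < u) :
    Real.log (hashYTail μ u) / √u ≤
      -(√2 * a) + Real.log (μ⁻¹ * (1 - Real.exp (-b))⁻¹) / √u := by
  have hlt : Real.exp (-b) < 1 := Real.exp_lt_one_iff.2 (by linarith)
  have hpos : 0 < μ⁻¹ * (1 - Real.exp (-b))⁻¹ :=
    mul_pos (inv_pos.2 hμ.1) (inv_pos.2 (by linarith))
  have hsu : 0 < √u := Real.sqrt_pos.2 hu
  have h := Real.log_le_log (hashYTail_pos hμ.1 hμ.2.le (sub_log_sub_one_pos hμ) u)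
    (hashYTail_le hμ.1 ha hb0 hb u)
  rw [Real.log_mul hpos.ne' (Real.exp_ne_zero _), Real.log_exp,
    Real.sqrt_mul (by norm_num : (0 : ℝ) ≤ 2)] at h
  rw [div_le_iff₀ hsu, add_mul, div_mul_cancel₀ _ hsu.ne']
  linarith

/-- The scaled logarithmic tail is bounded below at arbitrarily large arguments. -/
theorem exists_le_log_hashYTail_div_sqrt {μ : ℝ} (hμ : μ ∈ Set.Ioo (0 : ℝ) 1) (v : ℝ) :
    ∃ u ≥ v, -(4 * (2 - Real.log μ + Real.log 4)) ≤ Real.log (hashYTail μ u) / √u := by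
  obtain ⟨k, hk⟩ := exists_nat_ge (max 2 v)
  have hk2 : (2 : ℝ) ≤ k := (le_max_left _ _).trans hk
  have hkv : v ≤ k := (le_max_right _ _).trans hk
  refine ⟨(k : ℝ) ^ 2, by nlinarith, ?_⟩
  rw [Real.sqrt_sq (by linarith), le_div_iff₀ (by linarith), neg_mul]
  exact (Real.le_log_iff_exp_le (hashYTail_pos hμ.1 hμ.2.le (sub_log_sub_one_pos hμ) _)).2
    (exp_le_hashYTail hμ.1 hμ.2.le (sub_log_sub_one_pos hμ) (by exact_mod_cast hk2) le_rfl)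

/-- **Upper tail bound for `Y⁽ⁿ⁾` in hashing with linear probing.**
For every `y > 0`,
`limsup_n sup_{u ≥ √(N_n y)} (1/√u) log P(Y⁽ⁿ⁾ ≥ u) ≤ -√2 κ`, where
`κ = μ - log μ - 1 > 0`. -/
theorem hash_Y_tail_upper
    (m : ℕ → ℕ) (hlt : ∀ n, n < m n)
    (hm : Tendsto m atTop atTop)
    (hN : Tendsto (fun n => m n - n) atTop atTop)
    (μ : ℝ) (hμ : μ ∈ Set.Ioo (0 : ℝ) 1)
    (hμn : Tendsto (fun n : ℕ => (n : ℝ) / (m n : ℝ)) atTop (nhds μ))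
    (y : ℝ) (hy : 0 < y) :
    0 < μ - Real.log μ - 1 ∧
    limsup (fun n : ℕ =>
        sSup ((fun u : ℝ => Real.log (hashYTail ((n : ℝ) / (m n : ℝ)) u) / Real.sqrt u) ''
          Set.Ici (Real.sqrt (((m n - n : ℕ) : ℝ) * y)))) atTop
      ≤ -(Real.sqrt 2 * (μ - Real.log μ - 1)) := by
  have hκ := sub_log_sub_one_pos hμ
  refine ⟨hκ, ?_⟩
  have hcont : ContinuousAt (fun x : ℝ => x - Real.log x - 1) μ :=
    (continuousAt_id.sub (Real.continuousAt_log hμ.1.ne')).sub continuousAt_const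
  have hκn := hcont.tendsto.comp hμn
  have hmem : ∀ᶠ n : ℕ in atTop, (n : ℝ) / (m n : ℝ) ∈ Set.Ioo (0 : ℝ) 1 :=
    hμn.eventually (Ioo_mem_nhds hμ.1 hμ.2)
  have hthr : Tendsto (fun n => √(((m n - n : ℕ) : ℝ) * y)) atTop atTop :=
    Real.tendsto_sqrt_atTop.comp ((tendsto_natCast_atTop_atTop.comp hN).atTop_mul_const hy)
  have hbound : ∀ ε > 0, ∀ᶠ n : ℕ in atTop, ∀ u ≥ √(((m n - n : ℕ) : ℝ) * y),
      Real.log (hashYTail ((n : ℝ) / (m n : ℝ)) u) / √u ≤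
        -(√2 * (μ - Real.log μ - 1)) + ε := by
    intro ε hε
    set κ := μ - Real.log μ - 1
    obtain ⟨δ, hδ, hδκ, hδε⟩ : ∃ δ > 0, δ ≤ κ / 4 ∧ δ ≤ ε / 8 :=
      ⟨min (κ / 4) (ε / 8), by positivity, min_le_left _ _, min_le_right _ _⟩
    have hB : 0 < (1 - Real.exp (-δ))⁻¹ :=
      inv_pos.2 (sub_pos.2 (Real.exp_lt_one_iff.2 (by linarith)))
    have hlog : Tendsto
        (fun n : ℕ => Real.log (((n : ℝ) / (m n : ℝ))⁻¹ * (1 - Real.exp (-δ))⁻¹)) atTop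
        (nhds (Real.log (μ⁻¹ * (1 - Real.exp (-δ))⁻¹))) :=
      ((hμn.inv₀ hμ.1.ne').mul_const _).log (mul_pos (inv_pos.2 hμ.1) hB).ne'
    set K := |Real.log (μ⁻¹ * (1 - Real.exp (-δ))⁻¹)| + 1
    filter_upwards [hmem, hκn.eventually (lt_mem_nhds (show κ - δ < κ by linarith)),
      hlog.eventually (gt_mem_nhds (lt_of_le_of_lt (le_abs_self _) (lt_add_one _))),
      hthr.eventually_gt_atTop 0,
      (Real.tendsto_sqrt_atTop.comp hthr).eventually_ge_atTop (2 * K / ε)]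
      with n hn hκn hK hpos hlarge u hu
    have hu0 : 0 < u := hpos.trans_le hu
    have hsu : 0 < √u := Real.sqrt_pos.2 hu0
    refine (log_hashYTail_div_sqrt_le hn (a := κ - 2 * δ) (b := δ) (by linarith) hδ
      (by simp only [Function.comp] at hκn; linarith) hu0).trans ?_
    have hterm : Real.log (((n : ℝ) / (m n : ℝ))⁻¹ * (1 - Real.exp (-δ))⁻¹) / √u ≤ ε / 2 := by
      have hle : 2 * K / ε ≤ √u := hlarge.trans (Real.sqrt_le_sqrt hu)
      rw [div_le_iff₀ hε] at hle
      rw [div_le_iff₀ hsu]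
      linarith
    have h2 : √2 ≤ 2 := Real.sqrt_le_iff.2 (by norm_num)
    have := mul_le_mul_of_nonneg_right h2 hδ.le
    linarith
  have hcobdd : IsCoboundedUnder (· ≤ ·) atTop (fun n : ℕ =>
      sSup ((fun u : ℝ => Real.log (hashYTail ((n : ℝ) / (m n : ℝ)) u) / √u) ''
        Set.Ici √(((m n - n : ℕ) : ℝ) * y))) := by
    have hlog : Tendsto (fun n : ℕ => -(4 * (2 - Real.log ((n : ℝ) / (m n : ℝ)) + Real.log 4)))
        atTop (nhds (-(4 * (2 - Real.log μ + Real.log 4)))) :=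
      ((((hμn.log hμ.1.ne').const_sub 2).add_const _).const_mul 4).neg
    refine IsBoundedUnder.isCoboundedUnder_le
      ⟨-(4 * (2 - Real.log μ + Real.log 4)) - 1, eventually_map.2 ?_⟩
    filter_upwards [hmem, hbound 1 one_pos, hlog.eventually (lt_mem_nhds (sub_one_lt _))]
      with n hn hbd hlow
    obtain ⟨u, hu, hle⟩ := exists_le_log_hashYTail_div_sqrt hn √(((m n - n : ℕ) : ℝ) * y)
    exact hlow.le.trans (hle.trans (le_csSup ⟨_, Set.forall_mem_image.2 hbd⟩ ⟨u, hu, rfl⟩))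
  refine le_of_forall_pos_le_add fun ε hε => limsup_le_of_le hcobdd ?_
  filter_upwards [hbound ε hε] with n hn
  exact csSup_le (Set.nonempty_Ici.image _) (Set.forall_mem_image.2 hn)
end

section
/- Let μ_n ∈ (0,1) with μ_n → μ ∈ (0,1), let X^{(n)} have the Borel distribution with parameter μ_n, and let (l_n) be positive integers with l_n → ∞. Then log P(X^{(n)} = l_n) = −κ·l_n·(1 + o(1)) and log P(X^{(n)} ≥ l_n) = −κ·l_n·(1 + o(1)) as n → ∞, where κ = μ − log μ − 1 ∈ (0,∞). -/
open Filter Asymptotics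

/-- `P(X ≥ L)` for `X` having the Borel distribution with parameter `μ`. -/
noncomputable def borelTail (μ : ℝ) (L : ℕ) : ℝ :=
  ∑' k : ℕ, borelPMF μ (L + k)

/-- The upper half of Stirling's formula, with explicit constant `e`. -/
lemma log_factorial_le_stirling {l : ℕ} (hl : 0 < l) :
    Real.log (l.factorial : ℝ) ≤ l * Real.log l - l + Real.log l / 2 + 1 := by
  obtain ⟨k, rfl⟩ := Nat.exists_eq_succ_of_ne_zero hl.ne'
  have h := Stirling.log_stirlingSeq'_antitone (Nat.zero_le k)
  have hk : ((k.succ : ℕ) : ℝ) ≠ 0 := by positivity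
  simp only [Function.comp_apply] at h
  rw [Stirling.log_stirlingSeq_formula, Stirling.log_stirlingSeq_formula,
    Real.log_div hk (Real.exp_pos 1).ne', Real.log_mul two_ne_zero hk] at h
  norm_num at h
  push_cast
  linarith

lemma borelPMF_pos {m : ℝ} (hm : 0 < m) {l : ℕ} (hl : 0 < l) : 0 < borelPMF m l := by
  unfold borelPMF
  positivity

lemma log_borelPMF {m : ℝ} (hm : 0 < m) {l : ℕ} (hl : 0 < l) :
    Real.log (borelPMF m l) =
      -(m * l) + (l - 1) * (Real.log m + Real.log l) - Real.log (l.factorial : ℝ) := by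
  have hl' : (0 : ℝ) < l := by positivity
  unfold borelPMF
  rw [Real.log_div (by positivity) (by positivity),
    Real.log_mul (by positivity) (by positivity), Real.log_exp, Real.log_pow,
    Real.log_mul hm.ne' hl'.ne', Nat.cast_sub hl, Nat.cast_one]

lemma le_log_borelPMF {m : ℝ} (hm : m ∈ Set.Ioo (0 : ℝ) 1) {l : ℕ} (hl : 0 < l) :
    -(m - Real.log m - 1) * l - (1 + 2 * Real.log l) ≤ Real.log (borelPMF m l) := by
  rw [log_borelPMF hm.1 hl]
  have h := log_factorial_le_stirling hl
  have hlog : Real.log m ≤ 0 := Real.log_nonpos hm.1.le hm.2.le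
  have hlog' : 0 ≤ Real.log (l : ℝ) := Real.log_natCast_nonneg l
  linarith

lemma borelPMF_le {m : ℝ} (hm : 0 < m) {l : ℕ} (hl : 0 < l) :
    borelPMF m l ≤ Real.exp (-(m - Real.log m - 1)) ^ l / m := by
  rw [← Real.exp_nat_mul, ← Real.log_le_log_iff (borelPMF_pos hm hl) (by positivity),
    Real.log_div (by positivity) hm.ne', Real.log_exp, log_borelPMF hm hl]
  have h := Stirling.le_log_factorial_stirling hl.ne'
  have hlog : 0 ≤ Real.log (l : ℝ) := Real.log_natCast_nonneg l
  have hpi : 0 ≤ Real.log (2 * Real.pi) := Real.log_nonneg (by linarith [Real.pi_gt_three])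
  linarith

lemma borel_rate_pos {m : ℝ} (hm : m ∈ Set.Ioo (0 : ℝ) 1) : 0 < m - Real.log m - 1 := by
  linarith [Real.log_lt_sub_one_of_pos hm.1 hm.2.ne]

lemma hasSum_borelTail_majorant {m : ℝ} (hm : m ∈ Set.Ioo (0 : ℝ) 1) (l : ℕ) :
    HasSum (fun k => Real.exp (-(m - Real.log m - 1)) ^ (l + k) / m)
      (Real.exp (-(m - Real.log m - 1)) ^ l * (1 - Real.exp (-(m - Real.log m - 1)))⁻¹ / m) := by
  have hr : Real.exp (-(m - Real.log m - 1)) < 1 :=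
    Real.exp_lt_one_iff.2 (neg_lt_zero.2 (borel_rate_pos hm))
  simpa only [pow_add] using
    ((hasSum_geometric_of_lt_one (Real.exp_pos _).le hr).mul_left _).div_const m

lemma summable_borelPMF_add {m : ℝ} (hm : m ∈ Set.Ioo (0 : ℝ) 1) {l : ℕ} (hl : 0 < l) :
    Summable fun k => borelPMF m (l + k) :=
  .of_nonneg_of_le (fun k => (borelPMF_pos hm.1 (Nat.add_pos_left hl k)).le)
    (fun k => borelPMF_le hm.1 (Nat.add_pos_left hl k)) (hasSum_borelTail_majorant hm l).summable

lemma borelPMF_le_borelTail {m : ℝ} (hm : m ∈ Set.Ioo (0 : ℝ) 1) {l : ℕ} (hl : 0 < l) :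
    borelPMF m l ≤ borelTail m l :=
  (summable_borelPMF_add hm hl).le_tsum 0
    fun k _ => (borelPMF_pos hm.1 (Nat.add_pos_left hl k)).le

lemma log_borelTail_le {m : ℝ} (hm : m ∈ Set.Ioo (0 : ℝ) 1) {l : ℕ} (hl : 0 < l) :
    Real.log (borelTail m l) ≤ -(m - Real.log m - 1) * l +
      (-Real.log (1 - Real.exp (-(m - Real.log m - 1))) - Real.log m) := by
  have hr : 0 < 1 - Real.exp (-(m - Real.log m - 1)) :=
    sub_pos.2 (Real.exp_lt_one_iff.2 (neg_lt_zero.2 (borel_rate_pos hm)))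
  have hle : borelTail m l ≤ _ := hasSum_le
    (fun k => borelPMF_le hm.1 (Nat.add_pos_left hl k)) (summable_borelPMF_add hm hl).hasSum
    (hasSum_borelTail_majorant hm l)
  have h := Real.log_le_log ((borelPMF_pos hm.1 hl).trans_le (borelPMF_le_borelTail hm hl)) hle
  rw [Real.log_div (by have := hm.1; positivity) hm.1.ne', Real.log_mul (by positivity)
    (by positivity), Real.log_inv, Real.log_pow, Real.log_exp] at h
  linarith

/-- A sequence squeezed between `-a n * l n` up to logarithmic and convergent errors is
`-κ * l n + o(l n)` when `a n → κ`. -/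
lemma add_mul_isLittleO_of_squeeze {f a c : ℕ → ℝ} {κ C : ℝ} {l : ℕ → ℕ}
    (ha : Tendsto a atTop (nhds κ)) (hc : Tendsto c atTop (nhds C)) (hltop : Tendsto l atTop atTop)
    (hlower : ∀ n, -a n * l n - (1 + 2 * Real.log (l n)) ≤ f n)
    (hupper : ∀ n, f n ≤ -a n * l n + c n) :
    (fun n => f n + κ * (l n : ℝ)) =o[atTop] (fun n => (l n : ℝ)) := by
  have hcast : Tendsto (fun n => (l n : ℝ)) atTop atTop := tendsto_natCast_atTop_atTop.comp hltop
  have hbdd {u : ℕ → ℝ} {U : ℝ} (hu : Tendsto u atTop (nhds U)) :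
      u =o[atTop] (fun n => (l n : ℝ)) :=
    (hu.isBigO_one ℝ).trans_isLittleO
      ((isLittleO_const_left.2 (.inr (tendsto_norm_atTop_atTop.comp hcast))))
  have hrate : (fun n => (κ - a n) * (l n : ℝ)) =o[atTop] (fun n => (l n : ℝ)) := by
    have h0 : (fun n => κ - a n) =o[atTop] (fun _ => (1 : ℝ)) :=
      (isLittleO_one_iff ℝ).2 (by simpa using ha.const_sub κ)
    simpa using h0.mul_isBigO (isBigO_refl (fun n => (l n : ℝ)) atTop)
  have hlog : (fun n => 1 + 2 * Real.log (l n)) =o[atTop] (fun n => (l n : ℝ)) :=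
    (hbdd tendsto_const_nhds).add
      ((Real.isLittleO_log_id_atTop.comp_tendsto hcast).const_mul_left 2)
  have herr : (fun n => f n + a n * (l n : ℝ)) =o[atTop] (fun n => (l n : ℝ)) := by
    refine IsBigO.trans_isLittleO (.of_norm_le fun n => ?_) (hlog.norm_left.add (hbdd hc).norm_left)
    have h1 := hlower n
    have h2 := hupper n
    simp only [Real.norm_eq_abs]
    rw [abs_le]
    constructor <;> linarith [le_abs_self (1 + 2 * Real.log (l n)), le_abs_self (c n),
      abs_nonneg (1 + 2 * Real.log (l n)), abs_nonneg (c n)]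
  exact (herr.add hrate).congr_left fun n => by ring

/-- **Tail asymptotics of the Borel distribution.**
If `μ n → μ ∈ (0,1)` and `l n → ∞`, then
`log P(X⁽ⁿ⁾ = l n) = -κ l n (1 + o(1))` and `log P(X⁽ⁿ⁾ ≥ l n) = -κ l n (1 + o(1))`,
where `κ = μ - log μ - 1 ∈ (0, ∞)`. -/
theorem borel_tail_asymptotics
    (μn : ℕ → ℝ) (hμn : ∀ n, μn n ∈ Set.Ioo (0 : ℝ) 1)
    (μ : ℝ) (hμ : μ ∈ Set.Ioo (0 : ℝ) 1)
    (hconv : Tendsto μn atTop (nhds μ))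
    (l : ℕ → ℕ) (hl : ∀ n, 0 < l n) (hltop : Tendsto l atTop atTop) :
    0 < μ - Real.log μ - 1 ∧
    (fun n => Real.log (borelPMF (μn n) (l n)) + (μ - Real.log μ - 1) * (l n : ℝ))
      =o[atTop] (fun n => (l n : ℝ)) ∧
    (fun n => Real.log (borelTail (μn n) (l n)) + (μ - Real.log μ - 1) * (l n : ℝ))
      =o[atTop] (fun n => (l n : ℝ)) := by
  have hκ := borel_rate_pos hμ
  have hlog : Tendsto (fun n => Real.log (μn n)) atTop (nhds (Real.log μ)) :=
    hconv.log hμ.1.ne'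
  have hrate : Tendsto (fun n => μn n - Real.log (μn n) - 1) atTop
      (nhds (μ - Real.log μ - 1)) := (hconv.sub hlog).sub_const 1
  have hconst := (((Real.continuous_exp.tendsto _).comp hrate.neg).const_sub 1).log
    (sub_pos.2 (Real.exp_lt_one_iff.2 (neg_lt_zero.2 hκ))).ne' |>.neg.sub hlog
  have hlog_le (n : ℕ) := Real.log_le_log (borelPMF_pos (hμn n).1 (hl n))
    (borelPMF_le_borelTail (hμn n) (hl n))
  exact ⟨hκ,
    add_mul_isLittleO_of_squeeze hrate hconst hltop (fun n => le_log_borelPMF (hμn n) (hl n))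
      fun n => (hlog_le n).trans (log_borelTail_le (hμn n) (hl n)),
    add_mul_isLittleO_of_squeeze hrate hconst hltop
      (fun n => (le_log_borelPMF (hμn n) (hl n)).trans (hlog_le n))
      fun n => log_borelTail_le (hμn n) (hl n)⟩
end
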